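/- Programs are finite binary words, and $|p|$ is the length of $p \in \{0,1\}^*$. For a partial function $V : \{0,1\}^* \rightharpoonup X$ put $K_V(a) = \min\{|p| : V(p) = a\}$ (with $\min\emptyset = \infty$). For functions $f, g$ on $\mathbb{N}$, $f \le_{\rm ct} g$ means that there is a constant $c \in \mathbb{N}$ with $f(n) \le g(n) + c$ for all $n$, and $f =_{\rm ct} g$ means $f \le_{\rm ct} g$ and $g \le_{\rm ct} f$. A map $G : p \mapsto (G_1(p), G_2(p))$ from $\{0,1\}^*$ to pairs of partial recursive functions $\mathbb{N} \rightharpoonup \mathbb{N}$ is called partial-recursively given if $(p,x) \mapsto G_1(p)(x)$ and $(p,x) \mapsto G_2(p)(x)$ are partial recursive. Let $U = (U_1, U_2)$ be a strongly universal enumeration of pairs of partial recursive functions: $U$ is partial-recursively given, and there is a total recursive function $\mathrm{comp} : \{0,1\}^* \times \{0,1\}^* \to \{0,1\}^*$ such that the maps $p \mapsto U(\mathrm{comp}(e,p))$, $e \in \{0,1\}^*$, are exactly all the partial-recursively given maps, and such that for each $e$ there is a constant $c(e)$ with $|\mathrm{comp}(e,p)| \le |p| + c(e)$ for all $p$. The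 $\mathbb{Z}$-cardinal Kolmogorov complexity is $$K^{\mathbb{Z}}_{card}(m) = \min\{|p| : \mathrm{dom}\,U_1(p) \text{ and } \mathrm{dom}\,U_2(p) \text{ are finite and } \mathrm{card}(\mathrm{dom}\,U_1(p)) - \mathrm{card}(\mathrm{dom}\,U_2(p)) = m\}, \quad m \in \mathbb{Z}.$$ Let $\emptyset' = \{e : \varphi_e(e) \text{ converges}\}$ be the halting problem, and let $K' = K_{U'}$, where $U' : \{0,1\}^* \rightharpoonup \mathbb{N}$ is partial recursive in $\emptyset'$ and optimal, i.e. $K_{U'} \le_{\rm ct} K_W$ for every $W : \{0,1\}^* \rightharpoonup \mathbb{N}$ partial recursive in $\emptyset'$. Then $K^{\mathbb{Z}}_{card}$ and $K'$ take finite values on $\mathbb{N}$, and the restriction of $K^{\mathbb{Z}}_{card}$ to $\mathbb{N}$ coincides with $K'$ up to an additive constant: $K^{\mathbb{Z}}_{card}\!\upharpoonright\!\mathbb{N} =_{\rm ct} K'$. -/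

import Mathlib

/-- Programs: finite binary words. -/
abbrev Word : Type := List Bool

/-- `f ≤ct g` : there is a constant `c ∈ ℕ` with `f(n) ≤ g(n) + c` for all `n`. -/
def LeCt (f g : ℕ → ℕ∞) : Prop := ∃ c : ℕ, ∀ n : ℕ, f n ≤ g n + (c : ℕ∞)

/-- `f =ct g`, i.e. `f ≤ct g` and `g ≤ct f`; for finite-valued `f`, `g` this says that
`|f(n) − g(n)|` is bounded. -/
def EqCt (f g : ℕ → ℕ∞) : Prop := LeCt f g ∧ LeCt g f

/-- `K_V(a) = min {|p| : V(p) = a}`, with the convention `min ∅ = ∞`. -/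
noncomputable def KOf {α : Type} (V : Word →. α) (a : α) : ℕ∞ :=
  ⨅ p ∈ {p : Word | a ∈ V p}, (p.length : ℕ∞)

/-- The set `PR(ℕ → ℕ)` of partial recursive functions `ℕ ⇀ ℕ`. -/
abbrev PRFun : Type := {f : ℕ →. ℕ // Nat.Partrec f}

/-- A map `p ↦ (G₁(p), G₂(p))` from programs to pairs of partial recursive functions is
partial-recursively given if `(p, x) ↦ G₁(p)(x)` and `(p, x) ↦ G₂(p)(x)` are partial recursive. -/
def PRGivenPair (G : Word → PRFun × PRFun) : Prop :=
  Partrec₂ (fun (p : Word) (x : ℕ) => (G p).1.val x) ∧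
    Partrec₂ (fun (p : Word) (x : ℕ) => (G p).2.val x)

/-- `U` is a strongly universal enumeration of pairs of partial recursive functions: `U` is
partial-recursively given, and there is a total recursive `comp` such that the maps
`U_e : p ↦ U(comp(e, p))` are exactly all the partial-recursively given ones, and
`|comp(e, p)| ≤ |p| + c(e)`. -/
def StronglyUniversalPair (U : Word → PRFun × PRFun) : Prop :=
  PRGivenPair U ∧
    ∃ comp : Word → Word → Word, Computable₂ comp ∧
      Set.range (fun (e p : Word) => U (comp e p)) = {G | PRGivenPair G} ∧
      ∀ e : Word, ∃ c : ℕ, ∀ p : Word, (comp e p).length ≤ p.length + c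

/-- The effective ℤ-cardinal representation: `card^ℤ(f, g)` is defined iff `f` and `g` have
finite domains, and then equals `card(dom f) − card(dom g)`. -/
noncomputable def cardZ : PRFun × PRFun →. ℤ := fun fg =>
  ⟨fg.1.val.Dom.Finite ∧ fg.2.val.Dom.Finite,
    fun _ => (fg.1.val.Dom.ncard : ℤ) - (fg.2.val.Dom.ncard : ℤ)⟩

/-- The ℤ-cardinal Kolmogorov complexity
`K^ℤ_card(m) = min {|p| : card^ℤ(U₁(p), U₂(p)) = m}`. -/
noncomputable def KcardZ (U : Word → PRFun × PRFun) : ℤ → ℕ∞ :=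
  KOf (fun p : Word => cardZ (U p))

/-- `φ_e`, the partial recursive function `ℕ ⇀ ℕ` with Gödel number `e`. -/
def phi (e : ℕ) : ℕ →. ℕ := (Denumerable.ofNat Nat.Partrec.Code e).eval

/-- `∅'`, the halting problem `{e : φ_e(e) converges}`. -/
def halting : Set ℕ := {e : ℕ | (phi e e).Dom}

open Classical in
/-- The characteristic function of a set of integers, as an oracle. -/
noncomputable def chi (A : Set ℕ) : ℕ →. ℕ :=
  fun n => Part.some (if n ∈ A then 1 else 0)

/-- `V : {0,1}* ⇀ ℕ` is optimal among the functions partial recursive in `A`. -/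
def OptimalIn (A : Set ℕ) (V : Word →. ℕ) : Prop :=
  RecursiveIn {chi A} V ∧ ∀ W : Word →. ℕ, RecursiveIn {chi A} W → LeCt (KOf V) (KOf W)

open Filter

/-! ### Kolmogorov complexities -/

theorem KOf_le {α : Type} {V : Word →. α} {a : α} {p : Word} (h : a ∈ V p) :
    KOf V a ≤ p.length :=
  iInf₂_le p h

theorem le_KOf_add {α : Type} {V : Word →. α} {a : α} {k : ℕ∞} {c : ℕ}
    (h : ∀ p, a ∈ V p → k ≤ (p.length : ℕ∞) + c) : k ≤ KOf V a + c := by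
  refine tsub_le_iff_right.1 (le_iInf₂ fun p hp => ?_)
  exact tsub_le_iff_right.2 (h p hp)

/-! ### The limit lemma -/

/-- `f` is a limit of a primitive recursive function: whenever `f x` is defined, it is the eventual
value of `g x`. -/
def IsPrimrecLimit (f : ℕ →. ℕ) : Prop :=
  ∃ g : ℕ → ℕ → ℕ, Primrec₂ g ∧ ∀ x, ∀ n ∈ f x, ∀ᶠ s in atTop, g x s = n

namespace IsPrimrecLimit

theorem of_primrec {f : ℕ → ℕ} (hf : Primrec f) : IsPrimrecLimit f :=
  ⟨fun x _ => f x, hf.comp Primrec.fst, fun x n hn => by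
    simp only [PFun.coe_val, Part.mem_some_iff] at hn
    simp [hn]⟩

theorem chi_halting : IsPrimrecLimit (chi halting) := by
  refine ⟨fun x s => bif (Nat.Partrec.Code.evaln s (Denumerable.ofNat _ x) x).isSome then 1 else 0,
    ?_, ?_⟩
  · refine Primrec.cond (Primrec.option_isSome.comp (Nat.Partrec.Code.primrec_evaln.comp
      (((Primrec.snd).pair ((Primrec.ofNat _).comp Primrec.fst)).pair Primrec.fst)))
      (Primrec.const 1) (Primrec.const 0)
  · intro x n hn
    simp only [chi, Part.mem_some_iff] at hn
    subst hn
    by_cases hx : x ∈ halting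
    · obtain ⟨y, hy⟩ := Part.dom_iff_mem.1 hx
      obtain ⟨k, hk⟩ := Nat.Partrec.Code.evaln_complete.1 hy
      filter_upwards [eventually_ge_atTop k] with s hs
      have := Nat.Partrec.Code.evaln_mono hs hk
      rw [Option.mem_def.1 this]
      simp [hx]
    · refine Eventually.of_forall fun s => ?_
      cases h : Nat.Partrec.Code.evaln s (Denumerable.ofNat _ x) x with
      | none => simp [h, hx]
      | some y => exact absurd (Part.dom_iff_mem.2 ⟨y, Nat.Partrec.Code.evaln_sound h⟩) hx

theorem pair {f h : ℕ →. ℕ} (hf : IsPrimrecLimit f) (hh : IsPrimrecLimit h) :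
    IsPrimrecLimit fun n => Nat.pair <$> f n <*> h n := by
  obtain ⟨F, hF, lF⟩ := hf
  obtain ⟨H, hH, lH⟩ := hh
  refine ⟨fun x s => Nat.pair (F x s) (H x s), Primrec₂.natPair.comp hF hH, fun x n hn => ?_⟩
  simp only [Seq.seq, Part.map_eq_map, Part.mem_bind_iff, Part.mem_map_iff] at hn
  obtain ⟨_, ⟨a, ha, rfl⟩, b, hb, rfl⟩ := hn
  filter_upwards [lF x a ha, lH x b hb] with s h₁ h₂
  rw [h₁, h₂]

theorem comp {f h : ℕ →. ℕ} (hf : IsPrimrecLimit f) (hh : IsPrimrecLimit h) :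
    IsPrimrecLimit fun n => h n >>= f := by
  obtain ⟨F, hF, lF⟩ := hf
  obtain ⟨H, hH, lH⟩ := hh
  refine ⟨fun x s => F (H x s) s, hF.comp hH Primrec.snd, fun x n hn => ?_⟩
  obtain ⟨a, ha, hn⟩ := Part.mem_bind_iff.1 hn
  filter_upwards [lH x a ha, lF a n hn] with s h₁ h₂
  rw [h₁, h₂]

theorem prec {f h : ℕ →. ℕ} (hf : IsPrimrecLimit f) (hh : IsPrimrecLimit h) :
    IsPrimrecLimit fun p =>
      let (a, n) := Nat.unpair p
      Nat.rec (motive := fun _ => Part ℕ) (f a)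
        (fun y IH => IH >>= fun i => h (Nat.pair a (Nat.pair y i))) n := by
  obtain ⟨F, hF, lF⟩ := hf
  obtain ⟨H, hH, lH⟩ := hh
  refine ⟨fun x s => Nat.rec (F x.unpair.1 s)
    (fun y i => H (Nat.pair x.unpair.1 (Nat.pair y i)) s) x.unpair.2, ?_, fun x n hn => ?_⟩
  · have h₁ : Primrec fun q : ℕ × ℕ => q.1.unpair.1 :=
      Primrec.fst.comp (Primrec.unpair.comp Primrec.fst)
    refine Primrec.nat_rec' (h := fun q (r : ℕ × ℕ) =>
        H (Nat.pair q.1.unpair.1 (Nat.pair r.1 r.2)) q.2)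
      (Primrec.snd.comp (Primrec.unpair.comp Primrec.fst)) (hF.comp h₁ Primrec.snd) ?_
    exact hH.comp (Primrec₂.natPair.comp (h₁.comp Primrec.fst)
      (Primrec₂.natPair.comp (Primrec.fst.comp Primrec.snd) (Primrec.snd.comp Primrec.snd)))
      (Primrec.snd.comp Primrec.fst)
  · dsimp only at hn ⊢
    generalize x.unpair.2 = k at hn
    generalize x.unpair.1 = a at hn
    induction k generalizing n with
    | zero => exact lF a n hn
    | succ k ih =>
      obtain ⟨i, hi, hn⟩ := Part.mem_bind_iff.1 hn
      filter_upwards [ih i hi, lH _ n hn] with s h₁ h₂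
      simp only [h₁, h₂]

theorem rfind {f : ℕ →. ℕ} (hf : IsPrimrecLimit f) :
    IsPrimrecLimit fun a => Nat.rfind fun n => (fun m => m = 0) <$> f (Nat.pair a n) := by
  obtain ⟨F, hF, lF⟩ := hf
  refine ⟨fun a s => (List.range s).findIdx fun n => F (Nat.pair a n) s == 0, ?_, fun a n hn => ?_⟩
  · refine Primrec.list_findIdx (Primrec.list_range.comp Primrec.snd) ?_
    exact Primrec.beq.comp (hF.comp (Primrec₂.natPair.comp (Primrec.fst.comp Primrec.fst)
      Primrec.snd) (Primrec.snd.comp Primrec.fst)) (Primrec.const 0)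
  · obtain ⟨h₁, h₂⟩ := Nat.mem_rfind.1 hn
    have e₁ : ∀ᶠ s in atTop, F (Nat.pair a n) s = 0 := by
      simp only [Part.map_eq_map, Part.mem_map_iff] at h₁
      obtain ⟨m, hm, h0⟩ := h₁
      have : m = 0 := by simpa using h0
      exact this ▸ lF _ m hm
    have e₂ : ∀ᶠ s in atTop, ∀ m ∈ Finset.range n, F (Nat.pair a m) s ≠ 0 := by
      refine (eventually_all_finset _).2 fun m hm => ?_
      have := h₂ (Finset.mem_range.1 hm)
      simp only [Part.map_eq_map, Part.mem_map_iff] at this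
      obtain ⟨k, hk, h0⟩ := this
      have h0 : k ≠ 0 := by simpa using h0
      filter_upwards [lF _ k hk] with s hs
      rwa [hs]
    filter_upwards [e₁, e₂, eventually_gt_atTop n] with s h₁ h₂ h₃
    rw [List.findIdx_eq (by simpa using h₃)]
    refine ⟨by simpa using h₁, fun j hj => ?_⟩
    simpa using h₂ j (Finset.mem_range.2 hj)

theorem of_recursiveIn_halting {f : ℕ →. ℕ} (hf : Nat.RecursiveIn {chi halting} f) :
    IsPrimrecLimit f := by
  induction hf with
  | zero => exact of_primrec (Primrec.const 0)
  | succ => exact of_primrec Primrec.succ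
  | left => exact of_primrec (Primrec.fst.comp Primrec.unpair)
  | right => exact of_primrec (Primrec.snd.comp Primrec.unpair)
  | oracle g hg => exact Set.mem_singleton_iff.1 hg ▸ chi_halting
  | pair _ _ ih₁ ih₂ => exact ih₁.pair ih₂
  | comp _ _ ih₁ ih₂ => exact ih₁.comp ih₂
  | prec _ _ ih₁ ih₂ => exact ih₁.prec ih₂
  | rfind _ ih => exact ih.rfind

end IsPrimrecLimit

/-- Every semidecidable property of integers is many-one reducible to the halting problem. -/
theorem REPred.exists_primrec_mem_halting_iff {P : ℕ → Prop} (hP : REPred P) :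
    ∃ h : ℕ → ℕ, Primrec h ∧ ∀ n, h n ∈ halting ↔ P n := by
  have hq : Partrec fun n => (Part.assert (P n) fun _ => Part.some ()).map fun _ => 0 :=
    Partrec.map hP (Computable.const 0).to₂
  obtain ⟨c, hc⟩ := Nat.Partrec.Code.exists_code.1 (Partrec.nat_iff.1 hq)
  refine ⟨fun n => Encodable.encode (c.comp (Nat.Partrec.Code.const n)), ?_, fun n => ?_⟩
  · exact Primrec.encode.comp (Nat.Partrec.Code.primrec₂_comp.comp (Primrec.const c)
      Nat.Partrec.Code.primrec_const)
  · simp [halting, phi, Nat.Partrec.Code.eval, hc, Part.assert]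

/-- Limits of a primitive recursive function can be computed with the halting problem. -/
theorem exists_recursiveIn_halting_of_eventually {E : ℕ → ℕ → ℕ} (hE : Primrec₂ E) :
    ∃ f : ℕ →. ℕ, Nat.RecursiveIn {chi halting} f ∧
      ∀ x n, (∀ᶠ s in atTop, E x s = n) → n ∈ f x := by
  have hP : REPred fun z : ℕ => ∃ j, E z.unpair.1 (z.unpair.2 + j) ≠ E z.unpair.1 z.unpair.2 := by
    have h₁ : Primrec fun q : ℕ × ℕ => q.1.unpair.1 :=
      Primrec.fst.comp (Primrec.unpair.comp Primrec.fst)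
    have h₂ : Primrec fun q : ℕ × ℕ => q.1.unpair.2 :=
      Primrec.snd.comp (Primrec.unpair.comp Primrec.fst)
    have hb : Primrec₂ fun z j : ℕ =>
        !(E z.unpair.1 (z.unpair.2 + j) == E z.unpair.1 z.unpair.2) :=
      Primrec.not.comp (Primrec.beq.comp
        (hE.comp h₁ (Primrec.nat_add.comp h₂ Primrec.snd)) (hE.comp h₁ h₂))
    refine (Partrec.rfind hb.to_comp.partrec₂).dom_re.of_eq fun z => ?_
    rw [Nat.rfind_dom']
    simp
  obtain ⟨h, hh, hhalt⟩ := hP.exists_primrec_mem_halting_iff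
  have hfind : Nat.RecursiveIn {chi halting} fun x =>
      Nat.rfind fun k => (fun m => decide (m = 0)) <$> chi halting (h (Nat.pair x k)) :=
    .rfind (.of_eq (.comp (.oracle (chi halting) (Set.mem_singleton _))
      (Nat.Primrec.recursiveIn (Primrec.nat_iff.1 hh))) fun n => Part.bind_some _ _)
  refine ⟨_, .comp (Nat.Primrec.recursiveIn (Primrec.nat_iff.1 (hE.comp
    (Primrec.fst.comp Primrec.unpair) (Primrec.snd.comp Primrec.unpair))))
    (.pair (Nat.Primrec.recursiveIn Nat.Primrec.id) hfind), fun x n hn => ?_⟩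
  have hstable : ∃ k, ∀ j, E x (k + j) = E x k := by
    obtain ⟨k, hk⟩ := eventually_atTop.1 hn
    exact ⟨k, fun j => by rw [hk _ (Nat.le_add_right k j), hk k le_rfl]⟩
  classical
  have hk : Nat.find hstable ∈
      Nat.rfind fun k => (fun m => decide (m = 0)) <$> chi halting (h (Nat.pair x k)) := by
    refine Nat.mem_rfind.2 ⟨?_, fun {m} hm => ?_⟩
    · have := Nat.find_spec hstable
      simp [chi, hhalt, this]
    · have := Nat.find_min hstable hm
      simpa [chi, hhalt] using this
  have hval : E x (Nat.find hstable) = n := by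
    obtain ⟨s, hs⟩ := eventually_atTop.1 hn
    rw [← Nat.find_spec hstable s]
    exact hs _ (Nat.le_add_left _ _)
  simp only [Seq.seq, Part.map_eq_map, Part.bind_eq_bind, Part.mem_bind_iff, Part.mem_map_iff]
  refine ⟨Nat.pair x (Nat.find hstable), ⟨_, ⟨x, by simp, rfl⟩, _, hk, rfl⟩, ?_⟩
  simp [hval]

theorem RecursiveIn.comp_encode {O : Set (ℕ →. ℕ)} {α : Type} [Primcodable α] {f : ℕ →. ℕ}
    (hf : Nat.RecursiveIn O f) : RecursiveIn O fun a : α => f (Encodable.encode a) := by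
  have h : Nat.RecursiveIn O fun n =>
      (Encodable.decode (α := α) n : Part α).bind fun a => (Part.some a).map Encodable.encode :=
    (Partrec.some (α := α)).recursiveIn
  refine (Nat.RecursiveIn.comp hf h).of_eq fun n => ?_
  refine (Part.bind_assoc _ _ _).trans ?_
  congr 1
  funext a
  rw [Part.map_some]
  exact (Part.bind_some _ f).trans (Part.map_id' (fun _ => rfl) _).symm

/-! ### Cardinals of domains -/

/-- The number of `y < k` for which the program `c` is seen to halt on `(x, y)` at stage `k`. -/
def haltCount (c : Nat.Partrec.Code) (x k : ℕ) : ℕ :=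
  Nat.count (fun y => (c.evaln k (Nat.pair x y)).isSome) k

theorem primrec_haltCount (c : Nat.Partrec.Code) : Primrec₂ (haltCount c) := by
  have h : Primrec₂ fun x k : ℕ =>
      ((List.range k).filterMap fun y => c.evaln k (Nat.pair x y)).length := by
    refine Primrec.list_length.comp (Primrec.listFilterMap (Primrec.list_range.comp Primrec.snd) ?_)
    exact Nat.Partrec.Code.primrec_evaln.comp
      (((Primrec.snd.comp Primrec.fst).pair (Primrec.const c)).pair
        (Primrec₂.natPair.comp (Primrec.fst.comp Primrec.fst) Primrec.snd))
  refine h.of_eq fun x k => ?_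
  simp [haltCount, List.length_filterMap_eq_countP, Nat.count]

theorem eventually_haltCount_eq {c : Nat.Partrec.Code} {x : ℕ} {f : ℕ →. ℕ}
    (hf : ∀ y, c.eval (Nat.pair x y) = f y) (hfin : f.Dom.Finite) :
    ∀ᶠ k in atTop, haltCount c x k = f.Dom.ncard := by
  have h : ∀ᶠ k in atTop, ∀ y ∈ hfin.toFinset, y < k ∧ (c.evaln k (Nat.pair x y)).isSome := by
    refine (eventually_all_finset _).2 fun y hy => ?_
    have hy : (f y).Dom := hfin.mem_toFinset.1 hy
    obtain ⟨z, hz⟩ := Part.dom_iff_mem.1 hy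
    rw [← hf] at hz
    obtain ⟨m, hm⟩ := Nat.Partrec.Code.evaln_complete.1 hz
    filter_upwards [eventually_gt_atTop y, eventually_ge_atTop m] with k h₁ h₂
    exact ⟨h₁, Option.isSome_iff_exists.2 ⟨z, Nat.Partrec.Code.evaln_mono h₂ hm⟩⟩
  filter_upwards [h] with k hk
  rw [haltCount, Nat.count_eq_card_filter_range, Set.ncard_eq_toFinset_card _ hfin]
  congr 1
  ext y
  refine ⟨fun hy => ?_, fun hy => ?_⟩
  · obtain ⟨z, hz⟩ := Option.isSome_iff_exists.1 (Finset.mem_filter.1 hy).2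
    have := Nat.Partrec.Code.evaln_sound hz
    rw [hf] at this
    exact hfin.mem_toFinset.2 (Part.dom_iff_mem.2 ⟨z, this⟩)
  · exact Finset.mem_filter.2 ⟨Finset.mem_range.2 (hk y hy).1, (hk y hy).2⟩

theorem finite_and_ncard_unpair_lt {d : ℕ → ℕ} {N : ℕ} (hd : ∀ s, N ≤ s → d s = 0) :
    {z : ℕ | z.unpair.2 < d z.unpair.1}.Finite ∧
      {z : ℕ | z.unpair.2 < d z.unpair.1}.ncard = ∑ s ∈ Finset.range N, d s := by
  have h : {z : ℕ | z.unpair.2 < d z.unpair.1} =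
      (((Finset.range N).sigma fun s => Finset.range (d s)).image
        fun q => Nat.pair q.1 q.2 : Finset ℕ) := by
    ext z
    simp only [Set.mem_ofPred_eq, Finset.coe_image, Set.mem_image, Finset.mem_coe, Finset.mem_sigma,
      Finset.mem_range]
    constructor
    · refine fun hz => ⟨⟨z.unpair.1, z.unpair.2⟩, ⟨?_, hz⟩, Nat.pair_unpair z⟩
      by_contra hN
      simp [hd _ (not_lt.1 hN)] at hz
    · rintro ⟨⟨s, i⟩, ⟨-, hi⟩, rfl⟩
      simpa using hi
  rw [h]
  refine ⟨Finset.finite_toSet _, ?_⟩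
  rw [Set.ncard_coe_finset, Finset.card_image_of_injective, Finset.card_sigma]
  · simp
  · rintro ⟨s, i⟩ ⟨s', i'⟩ hq
    obtain ⟨rfl, rfl⟩ := Nat.pair_eq_pair.1 hq
    rfl

/-- The partial function with value `0` on the pairs `(s, i)` with `i < d s`. -/
def boundedPairs (d : ℕ → ℕ) : ℕ →. ℕ := fun z =>
  ((if z.unpair.2 < d z.unpair.1 then some 0 else none : Option ℕ) : Part ℕ)

theorem boundedPairs_dom (d : ℕ → ℕ) :
    (boundedPairs d).Dom = {z : ℕ | z.unpair.2 < d z.unpair.1} := by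
  ext z
  simp only [PFun.mem_dom, boundedPairs, Set.mem_ofPred_eq]
  split_ifs with h <;> simp [h]

theorem partrec_boundedPairs {α : Type} [Primcodable α] {d : α → ℕ → ℕ} (hd : Primrec₂ d) :
    Partrec₂ fun a => boundedPairs (d a) := by
  refine Computable.ofOption (Primrec.to_comp ?_)
  exact Primrec.ite (Primrec.nat_lt.comp (Primrec.snd.comp (Primrec.unpair.comp Primrec.snd))
    (hd.comp Primrec.fst (Primrec.fst.comp (Primrec.unpair.comp Primrec.snd))))
    (Primrec.const _) (Primrec.const _)

/-- The pair of functions whose domains count the increments and the decrements of `g`. -/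
def variationPair (g : ℕ → ℕ) : (ℕ →. ℕ) × (ℕ →. ℕ) :=
  (boundedPairs fun s => g (s + 1) - g s, boundedPairs fun s => g s - g (s + 1))

theorem variationPair_card {g : ℕ → ℕ} (h0 : g 0 = 0) {n : ℕ} (hg : ∀ᶠ s in atTop, g s = n) :
    (variationPair g).1.Dom.Finite ∧ (variationPair g).2.Dom.Finite ∧
      ((variationPair g).1.Dom.ncard : ℤ) - (variationPair g).2.Dom.ncard = n := by
  obtain ⟨N, hN⟩ := eventually_atTop.1 hg
  have h₁ := finite_and_ncard_unpair_lt (d := fun s => g (s + 1) - g s) (N := N) fun s hs => by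
    simp [hN s hs, hN (s + 1) (by omega)]
  have h₂ := finite_and_ncard_unpair_lt (d := fun s => g s - g (s + 1)) (N := N) fun s hs => by
    simp [hN s hs, hN (s + 1) (by omega)]
  simp only [variationPair, boundedPairs_dom]
  refine ⟨h₁.1, h₂.1, ?_⟩
  rw [h₁.2, h₂.2]
  push_cast
  rw [← Finset.sum_sub_distrib, ← hN N le_rfl]
  have := Finset.sum_range_sub (fun s => (g s : ℤ)) N
  simp only [h0, Nat.cast_zero, sub_zero] at this
  rw [← this]
  exact Finset.sum_congr rfl fun s _ => by omega

/-! ### Comparison of the two complexities -/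

theorem exists_recursiveIn_halting_mem_of_mem_cardZ {U : Word → PRFun × PRFun}
    (hU : PRGivenPair U) : ∃ W : Word →. ℕ, RecursiveIn {chi halting} W ∧
      ∀ (p : Word) (n : ℕ), (n : ℤ) ∈ cardZ (U p) → n ∈ W p := by
  have code : ∀ {F : Word → ℕ →. ℕ}, Partrec₂ F → ∃ c : Nat.Partrec.Code,
      ∀ (p : Word) y, c.eval (Nat.pair (Encodable.encode p) y) = F p y := by
    intro F hF
    obtain ⟨c, hc⟩ := Nat.Partrec.Code.exists_code.1 hF
    refine ⟨c, fun p y => ?_⟩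
    rw [hc]
    simp [Part.map_id']
  obtain ⟨c₁, h₁⟩ := code hU.1
  obtain ⟨c₂, h₂⟩ := code hU.2
  obtain ⟨f, hf, hlim⟩ := exists_recursiveIn_halting_of_eventually
    (Primrec.nat_sub.comp₂ (primrec_haltCount c₁) (primrec_haltCount c₂))
  refine ⟨_, RecursiveIn.comp_encode hf, fun p n hn => hlim _ _ ?_⟩
  obtain ⟨⟨fin₁, fin₂⟩, hn⟩ := hn
  simp only [cardZ] at hn
  filter_upwards [eventually_haltCount_eq (h₁ p) fin₁, eventually_haltCount_eq (h₂ p) fin₂]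
    with k e₁ e₂
  rw [e₁, e₂]
  omega

theorem exists_PRGivenPair_cardZ {V : Word →. ℕ} (hV : RecursiveIn {chi halting} V) :
    ∃ G : Word → PRFun × PRFun, PRGivenPair G ∧ ∀ p, ∀ n ∈ V p, (n : ℤ) ∈ cardZ (G p) := by
  obtain ⟨g, hg, h0, hlim⟩ : ∃ g : Word → ℕ → ℕ, Primrec₂ g ∧ (∀ p, g p 0 = 0) ∧
      ∀ p, ∀ n ∈ V p, ∀ᶠ s in atTop, g p s = n := by
    obtain ⟨g, hg, hlim⟩ := IsPrimrecLimit.of_recursiveIn_halting hV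
    refine ⟨fun p s => if s = 0 then 0 else g (Encodable.encode p) s, ?_, fun p => if_pos rfl,
      fun p n hn => ?_⟩
    · exact Primrec.ite (Primrec.eq.comp Primrec.snd (Primrec.const 0)) (Primrec.const 0)
        (hg.comp (Primrec.encode.comp Primrec.fst) Primrec.snd)
    · filter_upwards [hlim (Encodable.encode p) n (by simpa [Part.map_id'] using hn),
        eventually_ne_atTop 0] with s hs hs0
      rw [if_neg hs0, hs]
  have hs : Primrec₂ fun (p : Word) s => g p (s + 1) :=
    hg.comp Primrec.fst (Primrec.succ.comp Primrec.snd)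
  have p₁ : Partrec₂ fun p => (variationPair (g p)).1 :=
    partrec_boundedPairs (Primrec.nat_sub.comp₂ hs hg)
  have p₂ : Partrec₂ fun p => (variationPair (g p)).2 :=
    partrec_boundedPairs (Primrec.nat_sub.comp₂ hg hs)
  refine ⟨fun p => (⟨_, Partrec.nat_iff.1 (p₁.comp (Computable.const p) Computable.id)⟩,
    ⟨_, Partrec.nat_iff.1 (p₂.comp (Computable.const p) Computable.id)⟩), ⟨p₁, p₂⟩,
    fun p n hn => ?_⟩
  obtain ⟨f₁, f₂, hcard⟩ := variationPair_card (h0 p) (hlim p n hn)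
  exact ⟨⟨f₁, f₂⟩, hcard⟩

theorem KcardZ_leCt_KOf {U : Word → PRFun × PRFun} (hU : StronglyUniversalPair U)
    {V : Word →. ℕ} (hV : RecursiveIn {chi halting} V) :
    LeCt (fun n : ℕ => KcardZ U (n : ℤ)) (KOf V) := by
  obtain ⟨G, hG, hcard⟩ := exists_PRGivenPair_cardZ hV
  obtain ⟨-, comp, -, hrange, hlen⟩ := hU
  obtain ⟨e, rfl⟩ : G ∈ Set.range fun (e p : Word) => U (comp e p) := hrange ▸ hG
  obtain ⟨c, hc⟩ := hlen e
  refine ⟨c, fun n => le_KOf_add fun p hp => ?_⟩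
  exact (KOf_le (V := fun p => cardZ (U p)) (hcard p n hp)).trans (mod_cast hc p)

theorem OptimalIn.KOf_leCt_KcardZ {U : Word → PRFun × PRFun} (hU : PRGivenPair U)
    {V : Word →. ℕ} (hV : OptimalIn halting V) :
    LeCt (KOf V) (fun n : ℕ => KcardZ U (n : ℤ)) := by
  obtain ⟨W, hW, hmem⟩ := exists_recursiveIn_halting_mem_of_mem_cardZ hU
  obtain ⟨c, hc⟩ := hV.2 W hW
  refine ⟨c, fun n => le_KOf_add fun p hp => (hc n).trans ?_⟩
  gcongr
  exact KOf_le (hmem p n hp)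

theorem OptimalIn.KOf_ne_top {A : Set ℕ} {V : Word →. ℕ} (hV : OptimalIn A V) (n : ℕ) :
    KOf V n ≠ ⊤ := by
  obtain ⟨c, hc⟩ := hV.2 (fun p : Word => Part.some p.length)
    Computable.list_length.partrec.recursiveIn
  have h : KOf (fun p : Word => Part.some p.length) n ≤ n := by
    simpa using KOf_le (V := fun p : Word => Part.some p.length) (p := List.replicate n true)
      (a := n) (by simp)
  exact ne_top_of_le_ne_top (ENat.natCast_ne_top (n + c)) ((hc n).trans (by push_cast; gcongr))

/-- `K^ℤ_card` restricted to `ℕ` and `K'` are finite-valued and equal up to an additive constant. -/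
theorem stmt14 (U : Word → PRFun × PRFun) (hU : StronglyUniversalPair U)
    (U' : Word →. ℕ) (hU' : OptimalIn halting U') :
    (∀ n : ℕ, KcardZ U (n : ℤ) ≠ ⊤) ∧ (∀ n : ℕ, KOf U' n ≠ ⊤) ∧
      EqCt (fun n : ℕ => KcardZ U (n : ℤ)) (KOf U') := by
  have h := KcardZ_leCt_KOf hU hU'.1
  refine ⟨fun n => ?_, hU'.KOf_ne_top, h, hU'.KOf_leCt_KcardZ hU.1⟩
  obtain ⟨c, hc⟩ := h
  exact ne_top_of_le_ne_top (by simp [hU'.KOf_ne_top n]) (hc n)
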